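/- For every n ≥ 1, the hypergraph of the voting model with linear semantics—with vertex set {Q, T_1, …, T_n, F_1, …, F_n} and hyperedges {T_i}, {F_i}, {Q, T_i}, and {Q, F_i} for each i = 1, …, n—has hierarchy width exactly 2n + 1. -/

import Mathlib

/-- Connectivity relation between hyperedges within the edge set `E` of a hypergraph whose
hyperedges have vertex sets given by `dep`. -/
def EdgeConn {α ι : Type*} (dep : ι → Finset α) (E : Finset ι) : ι → ι → Prop :=
  Relation.ReflTransGen fun a b => a ∈ E ∧ b ∈ E ∧ ∃ v, v ∈ dep a ∧ v ∈ dep b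

open Classical in
/-- Hierarchy width of the hypergraph with hyperedges `E`, where hyperedge `e` consists of
the vertices `dep e`: `0` if there are no hyperedges; `1 +` the minimum over single-edge
removals for a connected hypergraph; the maximum over connected components otherwise. -/
noncomputable def hw {α ι : Type*} [DecidableEq ι] (dep : ι → Finset α) (E : Finset ι) : ℕ :=
  E.sup fun e =>
    1 + ((E.filter fun f => EdgeConn dep E e f).attach.inf fun f =>
      ((hw dep ((E.filter fun f => EdgeConn dep E e f).erase f.1) : ℕ∞))).toNat
termination_by E.card
decreasing_by
  exact lt_of_lt_of_le (Finset.card_erase_lt_of_mem f.2)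
    (Finset.card_le_card (Finset.filter_subset _ _))

/-- The hyperedges of the voting model with linear semantics.  The vertices are `none` (the
query `Q`) and `some (true, i)` (the voter `T i`), `some (false, i)` (the voter `F i`).
The hyperedge `Sum.inl (b, i)` is the singleton prior hyperedge `{T i}` (for `b = true`) or
`{F i}` (for `b = false`), and `Sum.inr (b, i)` is the voting hyperedge `{Q, T i}` or
`{Q, F i}`. -/
def votingDepLin (n : ℕ) : (Bool × Fin n) ⊕ (Bool × Fin n) → Finset (Option (Bool × Fin n))
  | Sum.inl (b, i) => {some (b, i)}
  | Sum.inr (b, i) => {none, some (b, i)}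

/-!
A nonempty hypergraph whose hyperedges split into a pairwise intersecting family `S` and a pairwise
disjoint rest, such that every `s ∈ S` meets a hyperedge of the rest, has width `#S + 1`.

Upper bound: deleting one hyperedge lowers the width by at most one, and a pairwise disjoint family
has width at most one. Lower bound: a pairwise intersecting family has width at least its
cardinality, so deleting a hyperedge outside `S` leaves width at least `#S`; deleting `s ∈ S` leaves
a hypergraph of the same kind, nonempty because the hyperedge outside `S` that `s` meets is still
there, and induction on `#S` applies.

In the voting model, `S` consists of the `2n` hyperedges `{Q, v}`, which all contain `Q`, and the
remaining hyperedges are the distinct singletons `{v}`.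
-/

section HierarchyWidth

open Finset

variable {α ι : Type*} {dep : ι → Finset α} {E E' S : Finset ι} {e f : ι} {m : ℕ}

open Classical in
/-- The connected component of the hyperedge `e` in the hypergraph with hyperedges `E`, as a set of
hyperedges; empty if `e ∉ E`. It has the same form as the components in `hw`. -/
noncomputable def edgeComponent (dep : ι → Finset α) (E : Finset ι) (e : ι) : Finset ι :=
  E.filter fun f => EdgeConn dep E e f

lemma mem_edgeComponent : f ∈ edgeComponent dep E e ↔ f ∈ E ∧ EdgeConn dep E e f := by
  classical exact mem_filter

lemma edgeComponent_subset : edgeComponent dep E e ⊆ E :=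
  fun _ hf => (mem_edgeComponent.1 hf).1

lemma self_mem_edgeComponent (he : e ∈ E) : e ∈ edgeComponent dep E e :=
  mem_edgeComponent.2 ⟨he, .refl⟩

lemma mem_edgeComponent_of_not_disjoint {g : ι} (hf : f ∈ edgeComponent dep E e) (hg : g ∈ E)
    (hfg : ¬Disjoint (dep f) (dep g)) : g ∈ edgeComponent dep E e := by
  obtain ⟨hfE, hef⟩ := mem_edgeComponent.1 hf
  exact mem_edgeComponent.2 ⟨hg, hef.tail ⟨hfE, hg, not_disjoint_iff.1 hfg⟩⟩

lemma edgeComponent_mono (hE : E ⊆ E') : edgeComponent dep E e ⊆ edgeComponent dep E' e := by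
  intro f hf
  obtain ⟨hfE, hef⟩ := mem_edgeComponent.1 hf
  exact mem_edgeComponent.2 ⟨hE hfE, Relation.ReflTransGen.mono
    (fun _ _ ⟨ha, hb, hab⟩ => ⟨hE ha, hE hb, hab⟩) _ _ hef⟩

lemma edgeComponent_eq_singleton (hE : (E : Set ι).PairwiseDisjoint dep) (he : e ∈ E) :
    edgeComponent dep E e = {e} := by
  refine eq_singleton_iff_unique_mem.2 ⟨self_mem_edgeComponent he, fun f hf => ?_⟩
  obtain ⟨-, hef⟩ := mem_edgeComponent.1 hf
  clear hf
  induction hef with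
  | refl => rfl
  | tail _ hstep ih =>
    obtain ⟨ha, hb, hmeet⟩ := hstep
    exact (hE.elim ha hb (not_disjoint_iff.2 hmeet)).symm.trans ih

lemma subset_edgeComponent_of_pairwise_not_disjoint (hSE : S ⊆ E)
    (hS : (S : Set ι).Pairwise fun a b => ¬Disjoint (dep a) (dep b)) (he : e ∈ S) :
    S ⊆ edgeComponent dep E e := by
  intro f hf
  have hself := self_mem_edgeComponent (dep := dep) (hSE he)
  rcases eq_or_ne e f with rfl | hef
  · exact hself
  · exact mem_edgeComponent_of_not_disjoint hself (hSE hf) (hS he hf hef)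

variable [DecidableEq ι]

lemma lt_hw_iff : m < hw dep E ↔
    ∃ e ∈ E, ∀ f ∈ edgeComponent dep E e, m ≤ hw dep ((edgeComponent dep E e).erase f) := by
  have hw_eq : hw dep E = E.sup fun e => 1 + ((edgeComponent dep E e).attach.inf fun f =>
      (hw dep ((edgeComponent dep E e).erase f.1) : ℕ∞)).toNat := by
    rw [hw]; rfl
  rw [hw_eq, Finset.lt_sup_iff]
  refine exists_congr fun e => and_congr_right fun he => ?_
  -- The infimum is over a nonempty set, so `toNat` does not collapse `⊤` to `0`.
  have hfinite : ((edgeComponent dep E e).attach.inf fun f =>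
      (hw dep ((edgeComponent dep E e).erase f.1) : ℕ∞)) ≠ ⊤ :=
    ne_top_of_le_ne_top (ENat.natCast_ne_top _)
      (inf_le (mem_attach _ ⟨e, self_mem_edgeComponent he⟩))
  rw [Nat.lt_one_add_iff, ← Nat.cast_le (α := ℕ∞), ENat.natCast_toNat hfinite, Finset.le_inf_iff]
  simp only [mem_attach, Nat.cast_le, forall_const, Subtype.forall]

lemma hw_le_add_one_iff : hw dep E ≤ m + 1 ↔
    ∀ e ∈ E, ∃ f ∈ edgeComponent dep E e, hw dep ((edgeComponent dep E e).erase f) ≤ m := by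
  simpa [Nat.lt_succ_iff] using not_congr (lt_hw_iff (dep := dep) (E := E) (m := m + 1))

lemma hw_empty : hw dep ∅ = 0 := by
  rw [hw, sup_empty, Nat.bot_eq_zero]

lemma hw_pos (hE : E.Nonempty) : 0 < hw dep E := by
  obtain ⟨e, he⟩ := hE
  exact lt_hw_iff.2 ⟨e, he, fun _ _ => Nat.zero_le _⟩

lemma hw_mono (hE : E ⊆ E') : hw dep E ≤ hw dep E' := by
  induction E' using Finset.strongInduction generalizing E with
  | H E' ih =>
    refine le_of_forall_lt fun m hm => ?_
    obtain ⟨e, he, hwidth⟩ := lt_hw_iff.1 hm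
    refine lt_hw_iff.2 ⟨e, hE he, fun f hf => ?_⟩
    have hsub : edgeComponent dep E e ⊆ edgeComponent dep E' e := edgeComponent_mono hE
    obtain ⟨g, hg, hgf⟩ : ∃ g ∈ edgeComponent dep E e,
        (edgeComponent dep E e).erase g ⊆ (edgeComponent dep E' e).erase f := by
      by_cases hfE : f ∈ edgeComponent dep E e
      · exact ⟨f, hfE, erase_subset_erase f hsub⟩
      · exact ⟨e, self_mem_edgeComponent he,
          (erase_subset _ _).trans (subset_erase.2 ⟨hsub, hfE⟩)⟩
    have hlt : (edgeComponent dep E' e).erase f ⊂ E' :=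
      (erase_ssubset hf).trans_subset edgeComponent_subset
    exact (hwidth g hg).trans (ih _ hlt hgf)

lemma hw_le_hw_erase_add_one : hw dep E ≤ hw dep (E.erase f) + 1 := by
  refine hw_le_add_one_iff.2 fun e he => ?_
  by_cases hf : f ∈ edgeComponent dep E e
  · exact ⟨f, hf, hw_mono (erase_subset_erase f edgeComponent_subset)⟩
  · exact ⟨e, self_mem_edgeComponent he,
      hw_mono ((erase_subset _ _).trans (subset_erase.2 ⟨edgeComponent_subset, hf⟩))⟩

lemma hw_le_hw_sdiff_add_card : hw dep E ≤ hw dep (E \ S) + #S := by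
  induction S using Finset.induction_on with
  | empty => simp
  | insert f S hf ih =>
    calc hw dep E ≤ hw dep (E \ S) + #S := ih
      _ ≤ hw dep ((E \ S).erase f) + 1 + #S := by gcongr; exact hw_le_hw_erase_add_one
      _ = hw dep (E \ insert f S) + #(insert f S) := by
        rw [sdiff_insert, card_insert_of_notMem hf]; ring

lemma hw_le_one_of_pairwiseDisjoint (hE : (E : Set ι).PairwiseDisjoint dep) : hw dep E ≤ 1 := by
  refine hw_le_add_one_iff.2 fun e he => ⟨e, self_mem_edgeComponent he, ?_⟩
  rw [edgeComponent_eq_singleton hE he, erase_singleton, hw_empty]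

lemma card_le_hw_of_pairwise_not_disjoint
    (hS : (S : Set ι).Pairwise fun a b => ¬Disjoint (dep a) (dep b)) : #S ≤ hw dep S := by
  induction S using Finset.strongInduction with
  | H S ih =>
    rcases S.eq_empty_or_nonempty with rfl | ⟨e, he⟩
    · simp
    rw [← card_erase_add_one he]
    refine lt_hw_iff.2 ⟨e, he, fun f hf => ?_⟩
    have hfS : f ∈ S := edgeComponent_subset hf
    calc #(S.erase e) = #(S.erase f) := by rw [card_erase_of_mem he, card_erase_of_mem hfS]
      _ ≤ hw dep (S.erase f) := ih _ (erase_ssubset hfS) (hS.mono (mod_cast erase_subset f S))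
      _ ≤ hw dep ((edgeComponent dep S e).erase f) := hw_mono (erase_subset_erase f
        (subset_edgeComponent_of_pairwise_not_disjoint Subset.rfl hS he))

lemma card_lt_hw_of_pairwise_not_disjoint (hE : E.Nonempty) (hSE : S ⊆ E)
    (hS : (S : Set ι).Pairwise fun a b => ¬Disjoint (dep a) (dep b))
    (hmeet : ∀ s ∈ S, ∃ t ∈ E \ S, ¬Disjoint (dep s) (dep t)) : #S < hw dep E := by
  induction S using Finset.strongInduction generalizing E with
  | H S ih =>
    rcases S.eq_empty_or_nonempty with rfl | ⟨e, he⟩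
    · exact hw_pos hE
    refine lt_hw_iff.2 ⟨e, hSE he, fun f _ => ?_⟩
    have hSC : S ⊆ edgeComponent dep E e :=
      subset_edgeComponent_of_pairwise_not_disjoint hSE hS he
    by_cases hfS : f ∈ S
    · have hmeet_erase : ∀ s ∈ S,
          ∃ t ∈ (edgeComponent dep E e).erase f \ S.erase f, ¬Disjoint (dep s) (dep t) := by
        intro s hs
        obtain ⟨t, ht, hst⟩ := hmeet s hs
        obtain ⟨htE, htS⟩ := mem_sdiff.1 ht
        have htC := mem_edgeComponent_of_not_disjoint (hSC hs) htE hst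
        exact ⟨t, mem_sdiff.2 ⟨mem_erase.2 ⟨(ne_of_mem_of_not_mem hfS htS).symm, htC⟩,
          fun h => htS (mem_of_mem_erase h)⟩, hst⟩
      have hnonempty : ((edgeComponent dep E e).erase f).Nonempty := by
        obtain ⟨t, ht, _⟩ := hmeet_erase f hfS
        exact ⟨t, (mem_sdiff.1 ht).1⟩
      rw [← card_erase_add_one hfS]
      exact ih _ (erase_ssubset hfS) hnonempty (erase_subset_erase f hSC)
        (hS.mono (mod_cast erase_subset f S)) fun s hs => hmeet_erase s (mem_of_mem_erase hs)
    · exact (card_le_hw_of_pairwise_not_disjoint hS).trans (hw_mono (subset_erase.2 ⟨hSC, hfS⟩))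

theorem hw_eq_card_add_one_of_pairwise_not_disjoint (hE : E.Nonempty) (hSE : S ⊆ E)
    (hS : (S : Set ι).Pairwise fun a b => ¬Disjoint (dep a) (dep b))
    (hmeet : ∀ s ∈ S, ∃ t ∈ E \ S, ¬Disjoint (dep s) (dep t))
    (hrest : ((E \ S : Finset ι) : Set ι).PairwiseDisjoint dep) : hw dep E = #S + 1 := by
  refine le_antisymm ?_ (card_lt_hw_of_pairwise_not_disjoint hE hSE hS hmeet)
  calc hw dep E ≤ hw dep (E \ S) + #S := hw_le_hw_sdiff_add_card
    _ ≤ 1 + #S := by gcongr; exact hw_le_one_of_pairwiseDisjoint hrest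
    _ = #S + 1 := add_comm _ _

end HierarchyWidth

section VotingModel

variable {n : ℕ}

lemma not_disjoint_votingDepLin_inr_inr (v w : Bool × Fin n) :
    ¬Disjoint (votingDepLin n (.inr v)) (votingDepLin n (.inr w)) :=
  Finset.not_disjoint_iff.2 ⟨none, by simp [votingDepLin], by simp [votingDepLin]⟩

lemma not_disjoint_votingDepLin_inr_inl (v : Bool × Fin n) :
    ¬Disjoint (votingDepLin n (.inr v)) (votingDepLin n (.inl v)) :=
  Finset.not_disjoint_iff.2 ⟨some v, by simp [votingDepLin], by simp [votingDepLin]⟩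

lemma disjoint_votingDepLin_inl_inl {v w : Bool × Fin n} (hvw : v ≠ w) :
    Disjoint (votingDepLin n (.inl v)) (votingDepLin n (.inl w)) := by
  simpa [votingDepLin] using hvw

end VotingModel

/-- For every `n ≥ 1`, the hypergraph of the voting model with linear semantics has
hierarchy width exactly `2n + 1`. -/
theorem stmt10 (n : ℕ) (hn : 1 ≤ n) : hw (votingDepLin n) Finset.univ = 2 * n + 1 := by
  let voting : Finset ((Bool × Fin n) ⊕ (Bool × Fin n)) := Finset.univ.map .inr
  have hcard : voting.card = 2 * n := by simp [voting]
  have hpriors : Finset.univ \ voting = Finset.univ.map .inl := by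
    ext (v | v) <;> simp [voting]
  rw [← hcard]
  refine hw_eq_card_add_one_of_pairwise_not_disjoint ⟨.inl (true, ⟨0, hn⟩), Finset.mem_univ _⟩
    (Finset.subset_univ _) ?voting_meet ?voting_meet_prior ?priors_disjoint
  case voting_meet =>
    simp only [voting, Finset.coe_map]
    rintro _ ⟨v, -, rfl⟩ _ ⟨w, -, rfl⟩ -
    exact not_disjoint_votingDepLin_inr_inr v w
  case voting_meet_prior =>
    simp only [hpriors, voting, Finset.forall_mem_map]
    exact fun v _ => ⟨.inl v, by simp, not_disjoint_votingDepLin_inr_inl v⟩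
  case priors_disjoint =>
    simp only [hpriors, Finset.coe_map]
    rintro _ ⟨v, -, rfl⟩ _ ⟨w, -, rfl⟩ hvw
    exact disjoint_votingDepLin_inl_inl (ne_of_apply_ne _ hvw)
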